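/- If a prefix state p ∈ P and a suffix state s ∈ S match, then their loop alphabets coincide: L_p = coL_s. -/

import Mathlib

open Filter Asymptotics
open scoped Classical

/-- An embedding order on words over a weighted alphabet. -/
structure EmbeddingOrder (A : Type*) (w : A → ℕ) where
  le : List A → List A → Prop
  le_refl : ∀ W, le W W
  le_trans : ∀ {U V W}, le U V → le V W → le U W
  le_antisymm : ∀ {V W}, le V W → le W V → V = W
  nil_le : ∀ W, le [] W
  weight_lt : ∀ {W V}, le W V → W ≠ V → (W.map w).sum < (V.map w).sum
  le_iff_factor : ∀ W V, le W V ↔ ∃ Ws : List (List A),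
    Ws.length = V.length ∧ Ws.flatten = W ∧ ∀ q ∈ Ws.zip V, le q.1 [q.2]

namespace EmbeddingOrder

variable {A : Type*} {w : A → ℕ} (E : EmbeddingOrder A w) {f : ℕ} (φ : Fin f → List A)

/-- The weight of a word: the sum of the weights of its letters. -/
def wt (w : A → ℕ) (W : List A) : ℕ := (W.map w).sum

/-- The class `C = A* ∩ Av(φ¹,…,φ^f)` of all words avoiding every forbidden word. -/
def Cset : Set (List A) := {W | ∀ i, ¬ E.le (φ i) W}

/-- The prefix state of `W`: its `i`-th component is the length of the longest prefix
of the forbidden word `φ i` contained in `W`. -/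
noncomputable def pstate (W : List A) : Fin f → ℕ := fun i =>
  sSup {p | p ≤ (φ i).length ∧ E.le ((φ i).take p) W}

/-- The suffix state of `W`: its `i`-th component is the length of the longest suffix
of the forbidden word `φ i` contained in `W`. -/
noncomputable def sstate (W : List A) : Fin f → ℕ := fun i =>
  sSup {p | p ≤ (φ i).length ∧ E.le ((φ i).drop ((φ i).length - p)) W}

/-- A prefix state `p` and a suffix state `s` *overlap* if `p i + s i ≥ ℓ_i` for some
`i` (equivalently, `XY ∉ C` whenever `X` has prefix state `p` and `Y` suffix state `s`);
otherwise they are *compatible*. -/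
def POverlap (p s : Fin f → ℕ) : Prop := ∃ i, (φ i).length ≤ p i + s i

/-- The (prefix) loop alphabet of a state `p`: the letters whose appending does not
change the prefix state `p`. -/
def stateLoopP (p : Fin f → ℕ) : Set A :=
  {a | ∀ X : List A, E.pstate φ X = p → E.pstate φ (X ++ [a]) = p}

/-- The suffix loop alphabet of a state `s`: the letters whose prepending does not
change the suffix state `s`. -/
def stateLoopS (s : Fin f → ℕ) : Set A :=
  {a | ∀ Y : List A, E.sstate φ Y = s → E.sstate φ (a :: Y) = s}

/-- `p'` is a *prefix successor* of `p`: `p' ≠ p` and some letter is a transition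
symbol from `p` to `p'`. -/
def PSucc (p p' : Fin f → ℕ) : Prop :=
  p ≠ p' ∧ ∃ b : A, ∀ X : List A, E.pstate φ X = p → E.pstate φ (X ++ [b]) = p'

/-- `s'` is a *suffix successor* of `s`. -/
def SSucc (s s' : Fin f → ℕ) : Prop :=
  s ≠ s' ∧ ∃ b : A, ∀ Y : List A, E.sstate φ Y = s → E.sstate φ (b :: Y) = s'

/-- Compatible states `p` (prefix) and `s` (suffix) *match* if every prefix successor
of `p` overlaps with `s` and every suffix successor of `s` overlaps with `p`. -/
def Matches (p s : Fin f → ℕ) : Prop :=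
  ¬ POverlap φ p s ∧ (∀ p', E.PSucc φ p p' → POverlap φ p' s) ∧
    ∀ s', E.SSucc φ s s' → POverlap φ p s'

/-- `ρ(S)`: the unique positive root of `1 − Σ_{a∈S} x^{weight a}` for a nonempty set
`S` of letters (realised as a supremum). -/
noncomputable def rhoOf (w : A → ℕ) (S : Set A) : ℝ :=
  sSup {x : ℝ | 0 ≤ x ∧ ∑' a : S, x ^ w (a : A) ≤ 1}

/-- The growth rate of `S*`: the reciprocal `ρ(S)⁻¹` of the positive root of
`1 − Σ_{a∈S} x^{weight a}`. -/
noncomputable def growthOf (w : A → ℕ) (S : Set A) : ℝ := (rhoOf w S)⁻¹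

/-- The dominant growth rate `γ` of the class: the largest growth rate of the loop
alphabet of a (reachable) prefix state. -/
noncomputable def gammaC : ℝ :=
  sSup {g : ℝ | ∃ X ∈ E.Cset φ, g = growthOf w (E.stateLoopP φ (E.pstate φ X))}

/-- The number of dominant loop blocks (equivalently, dominant states) in the prefix
decomposition of `W`. -/
noncomputable def domCountP (W : List A) : ℕ :=
  Set.ncard {p : Fin f → ℕ | (∃ j ≤ W.length, E.pstate φ (W.take j) = p) ∧
    growthOf w (E.stateLoopP φ p) = E.gammaC φ}

/-- The number of dominant loop blocks (equivalently, dominant states) in the suffix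
decomposition of `W`. -/
noncomputable def domCountS (W : List A) : ℕ :=
  Set.ncard {s : Fin f → ℕ | (∃ j ≤ W.length, E.sstate φ (W.drop j) = s) ∧
    growthOf w (E.stateLoopS φ s) = E.gammaC φ}

/-- `D`: the largest number of dominant states appearing on a single prefix transition
path of a word of the class. -/
noncomputable def Dmax : ℕ := sSup {d : ℕ | ∃ W ∈ E.Cset φ, E.domCountP φ W = d}

end EmbeddingOrder

open EmbeddingOrder

/-!
If `p` and `s` are the states of `X` and `Y` and they match, then both loop alphabets equal
`{a | XaY ∈ C}`. Read from the left, `XaY ∈ C` says that the prefix state of `Xa` is compatible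
with `s`. This state is either `p`, which is compatible with `s`, or a prefix successor of `p`,
which overlaps with `s`; so `XaY ∈ C` exactly when `a` is a loop symbol for `p`. Reading from the
right gives the same for `s`.
-/

namespace EmbeddingOrder

variable {A : Type*} {w : A → ℕ} (E : EmbeddingOrder A w)

theorem append_le_append {U V X Y : List A} (hUX : E.le U X) (hVY : E.le V Y) :
    E.le (U ++ V) (X ++ Y) := by
  rw [E.le_iff_factor] at hUX hVY ⊢
  obtain ⟨Us, hUs, rfl, hUX⟩ := hUX
  obtain ⟨Vs, hVs, rfl, hVY⟩ := hVY
  refine ⟨Us ++ Vs, by simp [hUs, hVs], List.flatten_append, fun q hq => ?_⟩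
  rw [List.zip_append hUs, List.mem_append] at hq
  exact hq.elim (hUX q) (hVY q)

theorem le_append_iff {W X Y : List A} :
    E.le W (X ++ Y) ↔ ∃ U V, W = U ++ V ∧ E.le U X ∧ E.le V Y := by
  constructor
  · intro h
    obtain ⟨Ws, hlen, rfl, hWs⟩ := (E.le_iff_factor _ _).1 h
    obtain ⟨Us, Vs, rfl, hUs, hVs⟩ : ∃ Us Vs, Ws = Us ++ Vs ∧
        Us.length = X.length ∧ Vs.length = Y.length := by
      rw [List.length_append] at hlen
      exact ⟨Ws.take X.length, Ws.drop X.length, (List.take_append_drop _ _).symm,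
        by simp [hlen], by simp [hlen]⟩
    rw [List.zip_append hUs] at hWs
    exact ⟨Us.flatten, Vs.flatten, List.flatten_append,
      (E.le_iff_factor _ _).2 ⟨Us, hUs, rfl, fun q hq => hWs q (List.mem_append_left _ hq)⟩,
      (E.le_iff_factor _ _).2 ⟨Vs, hVs, rfl, fun q hq => hWs q (List.mem_append_right _ hq)⟩⟩
  · rintro ⟨U, V, rfl, hUX, hVY⟩
    exact E.append_le_append hUX hVY

theorem le_of_prefix {U W : List A} (h : U <+: W) : E.le U W := by
  obtain ⟨V, rfl⟩ := h
  simpa using E.append_le_append (E.le_refl U) (E.nil_le V)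

theorem le_of_suffix {V W : List A} (h : V <:+ W) : E.le V W := by
  obtain ⟨U, rfl⟩ := h
  simpa using E.append_le_append (E.nil_le U) (E.le_refl V)

variable {f : ℕ} (φ : Fin f → List A)

theorem pstate_le_length (W : List A) (i : Fin f) : E.pstate φ W i ≤ (φ i).length :=
  csSup_le' fun _ hp => hp.1

theorem take_pstate_le (W : List A) (i : Fin f) :
    E.le ((φ i).take (E.pstate φ W i)) W :=
  (Nat.sSup_mem (s := {p | p ≤ (φ i).length ∧ E.le ((φ i).take p) W})
    ⟨0, Nat.zero_le _, E.nil_le W⟩ ⟨(φ i).length, fun _ hp => hp.1⟩).2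

theorem drop_length_sub_sstate_le (W : List A) (i : Fin f) :
    E.le ((φ i).drop ((φ i).length - E.sstate φ W i)) W :=
  (Nat.sSup_mem (s := {p | p ≤ (φ i).length ∧ E.le ((φ i).drop ((φ i).length - p)) W})
    ⟨0, Nat.zero_le _, by simpa using E.nil_le W⟩ ⟨(φ i).length, fun _ hp => hp.1⟩).2

variable {φ}

theorem length_le_pstate_iff {U W : List A} {i : Fin f} (hU : U <+: φ i) :
    U.length ≤ E.pstate φ W i ↔ E.le U W := by
  constructor <;> intro h
  · have hUp : U <+: (φ i).take (E.pstate φ W i) := List.prefix_take_iff.2 ⟨hU, h⟩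
    exact E.le_trans (E.le_of_prefix hUp) (E.take_pstate_le φ W i)
  · refine le_csSup ⟨(φ i).length, fun _ hp => hp.1⟩ ⟨hU.length_le, ?_⟩
    rwa [← List.prefix_iff_eq_take.1 hU]

theorem length_le_sstate_iff {V W : List A} {i : Fin f} (hV : V <:+ φ i) :
    V.length ≤ E.sstate φ W i ↔ E.le V W := by
  constructor <;> intro h
  · have hVs : V <:+ (φ i).drop ((φ i).length - E.sstate φ W i) := by
      rw [List.suffix_iff_eq_drop.1 hV]
      exact List.drop_suffix_drop_left _ (by omega)
    exact E.le_trans (E.le_of_suffix hVs) (E.drop_length_sub_sstate_le φ W i)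
  · refine le_csSup ⟨(φ i).length, fun _ hp => hp.1⟩ ⟨hV.length_le, ?_⟩
    rwa [← List.suffix_iff_eq_drop.1 hV]

theorem pstate_eq_pstate_iff {X X' : List A} :
    E.pstate φ X = E.pstate φ X' ↔ ∀ i U, U <+: φ i → (E.le U X ↔ E.le U X') := by
  constructor <;> intro h
  · intro i U hU
    rw [← E.length_le_pstate_iff hU, h, E.length_le_pstate_iff hU]
  · funext i
    simp only [pstate, h i _ (List.take_prefix _ _)]

theorem sstate_eq_sstate_iff {Y Y' : List A} :
    E.sstate φ Y = E.sstate φ Y' ↔ ∀ i V, V <:+ φ i → (E.le V Y ↔ E.le V Y') := by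
  constructor <;> intro h
  · intro i V hV
    rw [← E.length_le_sstate_iff hV, h, E.length_le_sstate_iff hV]
  · funext i
    simp only [sstate, h i _ (List.drop_suffix _ _)]

theorem pstate_append_congr {X X' : List A} (h : E.pstate φ X = E.pstate φ X')
    (Z : List A) : E.pstate φ (X ++ Z) = E.pstate φ (X' ++ Z) := by
  rw [pstate_eq_pstate_iff] at h ⊢
  intro i W hW
  simp only [le_append_iff]
  refine exists₂_congr fun U V => and_congr_right fun hUV => and_congr_left fun _ => ?_
  exact h i U (List.IsPrefix.trans ⟨V, hUV.symm⟩ hW)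

theorem sstate_append_congr {Y Y' : List A} (h : E.sstate φ Y = E.sstate φ Y')
    (Z : List A) : E.sstate φ (Z ++ Y) = E.sstate φ (Z ++ Y') := by
  rw [sstate_eq_sstate_iff] at h ⊢
  intro i W hW
  simp only [le_append_iff]
  refine exists₂_congr fun U V => and_congr_right fun hUV => and_congr_right fun _ => ?_
  exact h i V (List.IsSuffix.trans ⟨U, hUV.symm⟩ hW)

theorem length_le_pstate_add_sstate_iff {X Y : List A} {i : Fin f} :
    (φ i).length ≤ E.pstate φ X i + E.sstate φ Y i ↔ E.le (φ i) (X ++ Y) := by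
  rw [le_append_iff]
  constructor
  · intro h
    have hp := E.pstate_le_length φ X i
    refine ⟨_, _, (List.take_append_drop (E.pstate φ X i) (φ i)).symm,
      E.take_pstate_le φ X i, ?_⟩
    rw [← E.length_le_sstate_iff (List.drop_suffix _ _), List.length_drop]
    omega
  · rintro ⟨U, V, hUV, hU, hV⟩
    rw [← E.length_le_pstate_iff ⟨V, hUV.symm⟩] at hU
    rw [← E.length_le_sstate_iff ⟨U, hUV.symm⟩] at hV
    rw [hUV, List.length_append]
    exact Nat.add_le_add hU hV

theorem not_pOverlap_iff_append_mem_cset {X Y : List A} :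
    ¬ POverlap φ (E.pstate φ X) (E.sstate φ Y) ↔ X ++ Y ∈ E.Cset φ := by
  simp only [POverlap, length_le_pstate_add_sstate_iff, not_exists, Cset, Set.mem_ofPred_eq]

variable {X Y : List A} {a : A}

theorem mem_stateLoopP_pstate_iff :
    a ∈ E.stateLoopP φ (E.pstate φ X) ↔ E.pstate φ (X ++ [a]) = E.pstate φ X :=
  ⟨fun h => h X rfl, fun h _ hX' => (E.pstate_append_congr hX' [a]).trans h⟩

theorem mem_stateLoopS_sstate_iff :
    a ∈ E.stateLoopS φ (E.sstate φ Y) ↔ E.sstate φ (a :: Y) = E.sstate φ Y :=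
  ⟨fun h => h Y rfl, fun h _ hY' => (E.sstate_append_congr hY' [a]).trans h⟩

theorem pSucc_pstate_append_singleton (h : E.pstate φ (X ++ [a]) ≠ E.pstate φ X) :
    E.PSucc φ (E.pstate φ X) (E.pstate φ (X ++ [a])) :=
  ⟨h.symm, a, fun _ hX' => E.pstate_append_congr hX' [a]⟩

theorem sSucc_sstate_cons (h : E.sstate φ (a :: Y) ≠ E.sstate φ Y) :
    E.SSucc φ (E.sstate φ Y) (E.sstate φ (a :: Y)) :=
  ⟨h.symm, a, fun _ hY' => E.sstate_append_congr hY' [a]⟩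

variable {E}

theorem Matches.stateLoopP_eq (h : E.Matches φ (E.pstate φ X) (E.sstate φ Y)) :
    E.stateLoopP φ (E.pstate φ X) = {a | X ++ a :: Y ∈ E.Cset φ} := by
  obtain ⟨hcompat, hsucc, -⟩ := h
  ext a
  rw [mem_stateLoopP_pstate_iff, Set.mem_ofPred_eq, List.append_cons X a Y,
    ← not_pOverlap_iff_append_mem_cset]
  constructor
  · intro hloop
    rwa [hloop]
  · contrapose!
    exact fun hne => hsucc _ (E.pSucc_pstate_append_singleton hne)

theorem Matches.stateLoopS_eq (h : E.Matches φ (E.pstate φ X) (E.sstate φ Y)) :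
    E.stateLoopS φ (E.sstate φ Y) = {a | X ++ a :: Y ∈ E.Cset φ} := by
  obtain ⟨hcompat, -, hsucc⟩ := h
  ext a
  rw [mem_stateLoopS_sstate_iff, Set.mem_ofPred_eq, ← not_pOverlap_iff_append_mem_cset]
  constructor
  · intro hloop
    rwa [hloop]
  · contrapose!
    exact fun hne => hsucc _ (E.sSucc_sstate_cons hne)

end EmbeddingOrder

theorem loopAlphabets_eq_of_matches_general {A : Type*} {w : A → ℕ}
    (E : EmbeddingOrder A w) {f : ℕ} (φ : Fin f → List A) (X Y : List A)
    (hmatch : E.Matches φ (E.pstate φ X) (E.sstate φ Y)) :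
    E.stateLoopP φ (E.pstate φ X) = E.stateLoopS φ (E.sstate φ Y) :=
  hmatch.stateLoopP_eq.trans hmatch.stateLoopS_eq.symm

/-- **Lemma `lem-match1`.**  (Setting: a permutation class with finitely many
sum-indecomposable permutations, unbounded growth function and not sum-closed,
identified with the set `C = A* ∩ Av(φ¹,…,φ^f)` of words over the finite alphabet `A`
of its sum-indecomposables.)  If a prefix state `p ∈ P` and a suffix state `s ∈ S`
(here represented by words `X, Y ∈ C` realising them) match, then their loop alphabets
coincide: `L_p = coL_s`. -/
theorem loopAlphabets_eq_of_matches {A : Type*} [Fintype A] {w : A → ℕ}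
    (E : EmbeddingOrder A w) {f : ℕ} (φ : Fin f → List A)
    (hw : ∀ a, 0 < w a)
    (one : A) (hone : w one = 1) (hone_le : ∀ a : A, E.le [one] [a])
    (hf : 0 < f) (hφne : ∀ i, φ i ≠ [])
    (hφmin : ∀ i ψ, E.le ψ (φ i) → ψ ≠ φ i → ψ ∈ E.Cset φ)
    (hunb : ¬ ∃ M : ℕ, ∀ n : ℕ,
      Set.ncard {W : List A | W ∈ E.Cset φ ∧ EmbeddingOrder.wt w W = n} ≤ M)
    (X Y : List A) (hX : X ∈ E.Cset φ) (hY : Y ∈ E.Cset φ)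
    (hmatch : E.Matches φ (E.pstate φ X) (E.sstate φ Y)) :
    E.stateLoopP φ (E.pstate φ X) = E.stateLoopS φ (E.sstate φ Y) :=
  loopAlphabets_eq_of_matches_general E φ X Y hmatch
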